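/- arXiv:2401.09628 — 9 statements merged into one kernel-verified Lean document; each statement's English description precedes it below -/
import Mathlib

section
/- In a congestion game, the Rosenthal potential is an exact potential: for every joint pure strategy profile p = (p_1,…,p_n) ∈ S_1×⋯×S_n, every agent i, and every alternative pure strategy p_i' ∈ S_i, it holds that C_i(p_i', p_{-i}) − C_i(p_i, p_{-i}) = Φ(p_i', p_{-i}) − Φ(p_i, p_{-i}). -/
/-!
STATEMENT 0: In a congestion game, the Rosenthal potential is an exact potential:
for every joint pure strategy profile `p`, every agent `i`, and every alternative
pure strategy `p' ∈ S i`, it holds that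
`C_i(p', p_{-i}) − C_i(p_i, p_{-i}) = Φ(p', p_{-i}) − Φ(p)`.
-/

open Finset

noncomputable section

/-- The load of resource `e` under the joint pure profile `q`. -/
def load (n m : ℕ) (q : Fin n → Finset (Fin m)) (e : Fin m) : ℕ :=
  (Finset.univ.filter (fun j => e ∈ q j)).card

/-- The cost of agent `i` under the joint pure profile `q`. -/
def agentCost (n m : ℕ) (c : Fin m → ℕ → ℝ) (i : Fin n)
    (q : Fin n → Finset (Fin m)) : ℝ :=
  ∑ e ∈ q i, c e (load n m q e)

/-- The Rosenthal potential `Φ(q) = Σ_e Σ_{k=1}^{ℓ_e(q)} c_e(k)`. -/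
def rosenthal (n m : ℕ) (c : Fin m → ℕ → ℝ) (q : Fin n → Finset (Fin m)) : ℝ :=
  ∑ e : Fin m, ∑ k ∈ Finset.Icc 1 (load n m q e), c e k

theorem load_split (n m : ℕ) (q : Fin n → Finset (Fin m)) (i : Fin n) (e : Fin m) :
    load n m q e = (Finset.univ.filter (fun j => j ≠ i ∧ e ∈ q j)).card
      + (if e ∈ q i then 1 else 0) := by
  unfold load
  by_cases h : e ∈ q i
  · have : Finset.univ.filter (fun j => e ∈ q j)
        = insert i (Finset.univ.filter (fun j => j ≠ i ∧ e ∈ q j)) := by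
      ext j
      by_cases hj : j = i <;> simp [hj, h]
    rw [this, Finset.card_insert_of_notMem (by simp)]
    simp [h]
  · simp only [h, if_false, add_zero]
    congr 1
    ext j
    by_cases hj : j = i <;> simp [hj, h]

theorem rosenthal_split (n m : ℕ) (c : Fin m → ℕ → ℝ) (q : Fin n → Finset (Fin m)) (i : Fin n) :
    rosenthal n m c q = agentCost n m c i q
      + ∑ e : Fin m, ∑ k ∈ Finset.Icc 1
        (Finset.univ.filter (fun j => j ≠ i ∧ e ∈ q j)).card, c e k := by
  have h1 : agentCost n m c i q
      = ∑ e : Fin m, if e ∈ q i then c e (load n m q e) else 0 := by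
    simp [agentCost]
  rw [h1, rosenthal, ← Finset.sum_add_distrib]
  refine Finset.sum_congr rfl fun e _ => ?_
  rw [load_split n m q i e]
  by_cases h : e ∈ q i
  · simp only [h, if_true]
    rw [Finset.sum_Icc_succ_top (by omega), add_comm]
  · simp [h]

theorem rosenthal_exact_potential
    (n m : ℕ) (c : Fin m → ℕ → ℝ) (cmax : ℝ)
    (hmono : ∀ e, Monotone (c e))
    (hc : ∀ e k, 0 ≤ c e k ∧ c e k ≤ cmax)
    (S : Fin n → Set (Finset (Fin m))) (hS : ∀ i, (S i).Nonempty)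
    (p : Fin n → Finset (Fin m)) (hp : ∀ j, p j ∈ S j)
    (i : Fin n) (p' : Finset (Fin m)) (hp' : p' ∈ S i) :
    agentCost n m c i (Function.update p i p') - agentCost n m c i p
      = rosenthal n m c (Function.update p i p') - rosenthal n m c p := by
  rw [rosenthal_split n m c p i, rosenthal_split n m c (Function.update p i p') i]
  have h : ∀ e : Fin m, (Finset.univ.filter (fun j => j ≠ i ∧ e ∈ Function.update p i p' j))
      = Finset.univ.filter (fun j => j ≠ i ∧ e ∈ p j) := by
    intro e
    ext j
    by_cases hj : j = i <;> simp [hj]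
  simp only [h]
  ring

end
end

section
/- If c_e(0) = 0 for every resource e, then for every mixed profile π = (π_1,…,π_n) with marginalization x = (x_1,…,x_n) ∈ [0,1]^{n×m}, the expected Rosenthal potential under the product distribution equals the multilinear potential: E_{p ∼ π_1⊗⋯⊗π_n}[Φ(p)] = Φ(x), where Φ(x) = Σ_{e∈E} Σ_{S⊆[n]} (∏_{j∈S} x_{je}) (∏_{j∉S} (1−x_{je})) Σ_{ℓ=0}^{|S|} c_e(ℓ). -/
/-!
STATEMENT 1: If `c_e(0) = 0` for every resource `e`, then for every mixed profile
`π = (π_1,…,π_n)` with marginalization `x`, the expected Rosenthal potential under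
the product distribution equals the multilinear potential:
`E_{p ∼ π_1⊗⋯⊗π_n}[Φ(p)] = Φ(x)` where
`Φ(x) = Σ_e Σ_{S⊆[n]} (∏_{j∈S} x_{je})(∏_{j∉S}(1−x_{je})) Σ_{ℓ=0}^{|S|} c_e(ℓ)`.
-/

open Finset

noncomputable section

/-- Marginalization of a mixed profile: `x_{ie} = Pr_{p_i ∼ π_i}[e ∈ p_i]`. -/
def marginal (n m : ℕ) (π : Fin n → Finset (Fin m) → ℝ) (i : Fin n) (e : Fin m) : ℝ :=
  ∑ s : Finset (Fin m), if e ∈ s then π i s else 0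

/-- The multilinear potential
`Φ(x) = Σ_e Σ_{S⊆[n]} (∏_{j∈S} x_{je})(∏_{j∉S}(1−x_{je})) Σ_{ℓ=0}^{|S|} c_e(ℓ)`. -/
def multilinearPotential (n m : ℕ) (c : Fin m → ℕ → ℝ) (x : Fin n → Fin m → ℝ) : ℝ :=
  ∑ e : Fin m, ∑ S : Finset (Fin n),
    (∏ j ∈ S, x j e) * (∏ j ∈ Sᶜ, (1 - x j e)) *
      (∑ l ∈ Finset.range (S.card + 1), c e l)

theorem prob_aux (n m : ℕ) (π : Fin n → Finset (Fin m) → ℝ)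
    (hsum : ∀ i, ∑ s : Finset (Fin m), π i s = 1) (e : Fin m) (S : Finset (Fin n)) :
    (∏ j ∈ S, marginal n m π j e) * (∏ j ∈ Sᶜ, (1 - marginal n m π j e))
      = ∑ q : Fin n → Finset (Fin m),
        if Finset.univ.filter (fun j => e ∈ q j) = S then ∏ j, π j (q j) else 0 := by
  have h1 : ∀ j ∈ S, marginal n m π j e
      = ∑ s : Finset (Fin m), if (e ∈ s ↔ j ∈ S) then π j s else 0 := by
    intro j hj
    simp [marginal, hj]
  have h2 : ∀ j ∈ Sᶜ, 1 - marginal n m π j e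
      = ∑ s : Finset (Fin m), if (e ∈ s ↔ j ∈ S) then π j s else 0 := by
    intro j hj
    have hj' : j ∉ S := by simpa using hj
    rw [← hsum j, marginal, ← Finset.sum_sub_distrib]
    refine Finset.sum_congr rfl fun s _ => ?_
    by_cases h : e ∈ s <;> simp [h, hj']
  rw [Finset.prod_congr rfl h1, Finset.prod_congr rfl h2, Finset.prod_mul_prod_compl,
    Fintype.prod_sum]
  refine Finset.sum_congr rfl fun q _ => ?_
  by_cases h : Finset.univ.filter (fun j => e ∈ q j) = S
  · rw [if_pos h]
    refine Finset.prod_congr rfl fun j _ => ?_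
    rw [if_pos]
    rw [← h]
    simp
  · rw [if_neg h]
    have : ∃ j, ¬ (e ∈ q j ↔ j ∈ S) := by
      by_contra hcon
      push Not at hcon
      apply h
      ext j
      simpa using hcon j
    obtain ⟨j, hj⟩ := this
    exact Finset.prod_eq_zero (Finset.mem_univ j) (if_neg hj)

theorem expected_rosenthal_eq_multilinear
    (n m : ℕ) (c : Fin m → ℕ → ℝ) (cmax : ℝ)
    (hmono : ∀ e, Monotone (c e))
    (hc : ∀ e k, 0 ≤ c e k ∧ c e k ≤ cmax)
    (hzero : ∀ e, c e 0 = 0)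
    (S : Fin n → Set (Finset (Fin m))) (hS : ∀ i, (S i).Nonempty)
    (π : Fin n → Finset (Fin m) → ℝ)
    (hnn : ∀ i s, 0 ≤ π i s)
    (hsum : ∀ i, ∑ s : Finset (Fin m), π i s = 1)
    (hsupp : ∀ i s, π i s ≠ 0 → s ∈ S i) :
    (∑ q : Fin n → Finset (Fin m), (∏ j, π j (q j)) * rosenthal n m c q)
      = multilinearPotential n m c (marginal n m π) := by
  unfold multilinearPotential rosenthal
  simp_rw [prob_aux n m π hsum, Finset.mul_sum (Finset.univ : Finset (Fin m))]
  rw [Finset.sum_comm]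
  refine Finset.sum_congr rfl fun e _ => ?_
  simp_rw [Finset.sum_mul]
  rw [Finset.sum_comm]
  refine Finset.sum_congr rfl fun q _ => ?_
  simp_rw [ite_mul, zero_mul]
  rw [Finset.sum_ite_eq, if_pos (Finset.mem_univ _)]
  congr 1
  rw [Finset.sum_range_succ', hzero, add_zero, load, Finset.range_eq_Ico,
    Finset.sum_Ico_add' (c e) 0 _ 1]
  rfl

end
end

section
/- For mixed profiles π = (π_i, π_{-i}) and π' = (π_i', π_{-i}) of a congestion game that differ only in agent i's mixed strategy, with marginalizations x and x' (so x_j = x'_j for all j ≠ i), the expected cost difference equals the multilinear potential difference: C_i(π_i, π_{-i}) − C_i(π_i', π_{-i}) = Φ(x) − Φ(x'). -/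
/-!
STATEMENT 2: For mixed profiles `π = (π_i, π_{-i})` and `π' = (π_i', π_{-i})` of a
congestion game that differ only in agent `i`'s mixed strategy, with marginalizations
`x` and `x'`, the expected cost difference equals the multilinear potential difference:
`C_i(π_i, π_{-i}) − C_i(π_i', π_{-i}) = Φ(x) − Φ(x')`.
-/

open Finset

noncomputable section

/-- Expected cost of agent `i` under the product of the mixed strategies `π`. -/
def expCost (n m : ℕ) (c : Fin m → ℕ → ℝ) (π : Fin n → Finset (Fin m) → ℝ)
    (i : Fin n) : ℝ :=
  ∑ q : Fin n → Finset (Fin m), (∏ j, π j (q j)) * agentCost n m c i q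

def wgt (n m : ℕ) (x : Fin n → Fin m → ℝ) (e : Fin m) (F : Finset (Fin n) → ℝ) : ℝ :=
  ∑ S : Finset (Fin n), (∏ j, if j ∈ S then x j e else 1 - x j e) * F S

lemma prod_form (n : ℕ) (f g : Fin n → ℝ) (S : Finset (Fin n)) :
    (∏ j ∈ S, f j) * (∏ j ∈ Sᶜ, g j) = ∏ j, if j ∈ S then f j else g j := by
  rw [← Finset.prod_mul_prod_compl S (fun j => if j ∈ S then f j else g j)]
  congr 1
  · exact Finset.prod_congr rfl (fun j hj => by simp [hj])
  · refine Finset.prod_congr rfl (fun j hj => ?_)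
    rw [Finset.mem_compl] at hj
    simp [hj]

lemma exp_eq_wgt (n m : ℕ) (π : Fin n → Finset (Fin m) → ℝ)
    (hsum : ∀ i, ∑ s : Finset (Fin m), π i s = 1) (e : Fin m) (F : Finset (Fin n) → ℝ) :
    ∑ q : Fin n → Finset (Fin m), (∏ j, π j (q j)) * F (Finset.univ.filter (fun j => e ∈ q j))
      = wgt n m (marginal n m π) e F := by
  have h1 : ∀ (S : Finset (Fin n)) (j : Fin n),
      (if j ∈ S then marginal n m π j e else 1 - marginal n m π j e)
        = ∑ s : Finset (Fin m), if (e ∈ s ↔ j ∈ S) then π j s else 0 := by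
    intro S j
    by_cases hj : j ∈ S
    · simp [hj, marginal]
    · simp only [hj, if_false, iff_false, marginal]
      rw [← hsum j, ← Finset.sum_sub_distrib]
      refine Finset.sum_congr rfl (fun s _ => ?_)
      by_cases h : e ∈ s <;> simp [h]
  have h2 : ∀ (S : Finset (Fin n)) (q : Fin n → Finset (Fin m)),
      (∏ j, if (e ∈ q j ↔ j ∈ S) then π j (q j) else 0)
        = if (Finset.univ.filter (fun j => e ∈ q j)) = S then ∏ j, π j (q j) else 0 := by
    intro S q
    split_ifs with h
    · subst h
      simp
    · have : ∃ j, ¬ (e ∈ q j ↔ j ∈ S) := by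
        by_contra hh
        push Not at hh
        exact h (by ext j; simp [hh j])
      obtain ⟨j, hj⟩ := this
      exact Finset.prod_eq_zero (Finset.mem_univ j) (by simp [hj])
  unfold wgt
  simp_rw [h1, Fintype.prod_sum, h2, Finset.sum_mul]
  rw [Finset.sum_comm]
  refine Finset.sum_congr rfl (fun q _ => ?_)
  simp [ite_mul]

lemma wgt_indep (n m : ℕ) (x y : Fin n → Fin m → ℝ) (e : Fin m) (G : Finset (Fin n) → ℝ)
    (i : Fin n) (hxy : ∀ j, j ≠ i → x j e = y j e) (hG : ∀ S, i ∉ S → G (insert i S) = G S) :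
    wgt n m x e G = wgt n m y e G := by
  obtain ⟨U, hU, hiU⟩ : ∃ U : Finset (Fin n), Finset.univ = insert i U ∧ i ∉ U :=
    ⟨Finset.univ.erase i, (Finset.insert_erase (Finset.mem_univ i)).symm,
      Finset.notMem_erase i _⟩
  have hne : ∀ j ∈ U, j ≠ i := fun j hj h => hiU (h ▸ hj)
  have key : ∀ z : Fin n → Fin m → ℝ, wgt n m z e G
      = ∑ T ∈ U.powerset,
        (∏ j ∈ U, if j ∈ T then z j e else 1 - z j e) * G T := by
    intro z
    unfold wgt
    rw [← Finset.powerset_univ, hU,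
      Finset.sum_powerset_insert hiU, ← Finset.sum_add_distrib]
    refine Finset.sum_congr rfl (fun T hT => ?_)
    have hiT : i ∉ T := fun h => hiU (Finset.mem_powerset.1 hT h)
    rw [Finset.prod_insert hiU, Finset.prod_insert hiU,
      hG T hiT]
    have : (∏ j ∈ U, if j ∈ insert i T then z j e else 1 - z j e)
        = ∏ j ∈ U, if j ∈ T then z j e else 1 - z j e := by
      refine Finset.prod_congr rfl (fun j hj => ?_)
      simp [Finset.mem_insert, hne j hj]
    rw [this]
    simp [hiT]
    ring
  rw [key, key]
  refine Finset.sum_congr rfl (fun T _ => ?_)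
  congr 1
  refine Finset.prod_congr rfl (fun j hj => ?_)
  rw [hxy j (hne j hj)]

lemma expCost_eq (n m : ℕ) (c : Fin m → ℕ → ℝ) (π : Fin n → Finset (Fin m) → ℝ)
    (hsum : ∀ i, ∑ s : Finset (Fin m), π i s = 1) (i : Fin n) :
    expCost n m c π i
      = ∑ e, wgt n m (marginal n m π) e (fun S => if i ∈ S then c e S.card else 0) := by
  simp_rw [← exp_eq_wgt n m π hsum]
  rw [Finset.sum_comm]
  unfold expCost agentCost load
  refine Finset.sum_congr rfl (fun q _ => ?_)
  rw [← Finset.mul_sum]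
  congr 1
  simp

theorem expected_cost_diff_eq_multilinear_potential_diff
    (n m : ℕ) (c : Fin m → ℕ → ℝ) (cmax : ℝ)
    (hmono : ∀ e, Monotone (c e))
    (hc : ∀ e k, 0 ≤ c e k ∧ c e k ≤ cmax)
    (S : Fin n → Set (Finset (Fin m))) (hS : ∀ i, (S i).Nonempty)
    (π π' : Fin n → Finset (Fin m) → ℝ)
    (hnn : ∀ i s, 0 ≤ π i s) (hnn' : ∀ i s, 0 ≤ π' i s)
    (hsum : ∀ i, ∑ s : Finset (Fin m), π i s = 1)
    (hsum' : ∀ i, ∑ s : Finset (Fin m), π' i s = 1)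
    (hsupp : ∀ i s, π i s ≠ 0 → s ∈ S i)
    (hsupp' : ∀ i s, π' i s ≠ 0 → s ∈ S i)
    (i : Fin n)
    (hdiff : ∀ j, j ≠ i → π j = π' j) :
    expCost n m c π i - expCost n m c π' i
      = multilinearPotential n m c (marginal n m π)
        - multilinearPotential n m c (marginal n m π') := by
  have hm : ∀ e j, j ≠ i → marginal n m π j e = marginal n m π' j e := by
    intro e j hj
    simp [marginal, hdiff j hj]
  rw [expCost_eq n m c π hsum, expCost_eq n m c π' hsum']
  unfold multilinearPotential
  simp_rw [prod_form]
  rw [← Finset.sum_sub_distrib, ← Finset.sum_sub_distrib]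
  refine Finset.sum_congr rfl (fun e _ => ?_)
  have hw := wgt_indep n m (marginal n m π) (marginal n m π') e
    (fun S => (∑ l ∈ Finset.range (S.card + 1), c e l) - if i ∈ S then c e S.card else 0) i
    (hm e) (by
      intro S hS
      simp [hS, Finset.sum_range_succ])
  unfold wgt at hw ⊢
  simp only [mul_sub, Finset.sum_sub_distrib] at hw
  linarith

end
end

section
/- The gradient of the multilinear potential is Lipschitz on the cube: for all x, y ∈ [0,1]^{n×m}, ‖∇Φ(x) − ∇Φ(y)‖₂ ≤ 2 n² √m · c_max · ‖x − y‖₂. -/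
/-!
STATEMENT 7: The gradient of the multilinear potential is Lipschitz on the cube:
for all `x, y ∈ [0,1]^{n×m}`, `‖∇Φ(x) − ∇Φ(y)‖₂ ≤ 2 n² √m · c_max · ‖x − y‖₂`,
where `‖·‖₂` is the Euclidean norm on `ℝ^{n×m}`.
-/

open Finset

noncomputable section

def Mw (n : ℕ) (S : Finset (Fin n)) (z : Fin n → ℝ) : ℝ :=
  ∏ j, (if j ∈ S then z j else 1 - z j)

def Mx (n : ℕ) (f : Finset (Fin n) → ℝ) (z : Fin n → ℝ) : ℝ :=
  ∑ S : Finset (Fin n), Mw n S z * f S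

def Dl (n : ℕ) (i : Fin n) (f : Finset (Fin n) → ℝ) (S : Finset (Fin n)) : ℝ :=
  f (insert i S) - f (S.erase i)

lemma Mw_eq (n : ℕ) (S : Finset (Fin n)) (z : Fin n → ℝ) :
    Mw n S z = (∏ j ∈ S, z j) * (∏ j ∈ Sᶜ, (1 - z j)) := by
  unfold Mw
  rw [Finset.prod_ite]
  congr 1
  · congr 1; ext; simp
  · congr 1; ext; simp

lemma Mw_sum (n : ℕ) (z : Fin n → ℝ) : ∑ S : Finset (Fin n), Mw n S z = 1 := by
  have h := Finset.prod_add (fun j => z j) (fun j => 1 - z j) (Finset.univ : Finset (Fin n))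
  simp only [add_sub_cancel, Finset.prod_const_one, Finset.powerset_univ] at h
  rw [h]
  refine Finset.sum_congr rfl fun S _ => ?_
  rw [Mw_eq, Finset.compl_eq_univ_sdiff]

lemma Mw_nonneg (n : ℕ) (S : Finset (Fin n)) (z : Fin n → ℝ)
    (hz : ∀ i, 0 ≤ z i ∧ z i ≤ 1) : 0 ≤ Mw n S z := by
  unfold Mw
  refine Finset.prod_nonneg fun j _ => ?_
  split_ifs
  · exact (hz j).1
  · linarith [(hz j).2]

lemma Mx_abs (n : ℕ) (f : Finset (Fin n) → ℝ) (z : Fin n → ℝ) (b : ℝ)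
    (hz : ∀ i, 0 ≤ z i ∧ z i ≤ 1) (hf : ∀ S, |f S| ≤ b) : |Mx n f z| ≤ b := by
  unfold Mx
  calc |∑ S : Finset (Fin n), Mw n S z * f S| ≤ ∑ S : Finset (Fin n), |Mw n S z * f S| :=
        Finset.abs_sum_le_sum_abs _ _
    _ ≤ ∑ S : Finset (Fin n), Mw n S z * b := by
        refine Finset.sum_le_sum fun S _ => ?_
        rw [abs_mul, abs_of_nonneg (Mw_nonneg n S z hz)]
        exact mul_le_mul_of_nonneg_left (hf S) (Mw_nonneg n S z hz)
    _ = b := by rw [← Finset.sum_mul, Mw_sum, one_mul]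

def tog (n : ℕ) (i : Fin n) (S : Finset (Fin n)) : Finset (Fin n) :=
  if i ∈ S then S.erase i else insert i S

lemma tog_inv (n : ℕ) (i : Fin n) : Function.Involutive (tog n i) := by
  intro S
  unfold tog
  by_cases h : i ∈ S <;> simp [h]

lemma tog_sum (n : ℕ) (i : Fin n) (g : Finset (Fin n) → ℝ) :
    ∑ S, g (tog n i S) = ∑ S, g S :=
  Equiv.sum_comp (tog_inv n i).toPerm g

lemma toggle (n : ℕ) (i : Fin n) (f : Finset (Fin n) → ℝ) (z : Fin n → ℝ) :
    ∑ S : Finset (Fin n), (∏ j ∈ Finset.univ.erase i, (if j ∈ S then z j else 1 - z j)) *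
      (if i ∈ S then 1 else -1) * f S = Mx n (Dl n i f) z := by
  unfold Mx
  have key : ∀ g h : Finset (Fin n) → ℝ, (∀ S, g S + g (tog n i S) = h S + h (tog n i S)) →
      ∑ S, g S = ∑ S, h S := by
    intro g h H
    have h1 : ∑ S, (g S + g (tog n i S)) = ∑ S, (h S + h (tog n i S)) :=
      Finset.sum_congr rfl fun S _ => H S
    rw [Finset.sum_add_distrib, Finset.sum_add_distrib, tog_sum, tog_sum] at h1
    linarith
  apply key
  intro S
  have hw : ∀ T, Mw n T z = (if i ∈ T then z i else 1 - z i) *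
      ∏ j ∈ Finset.univ.erase i, (if j ∈ T then z j else 1 - z j) := by
    intro T
    unfold Mw
    rw [Finset.mul_prod_erase Finset.univ (fun j => if j ∈ T then z j else 1 - z j)
      (Finset.mem_univ i)]
  have hp : ∏ j ∈ Finset.univ.erase i, (if j ∈ tog n i S then z j else 1 - z j)
      = ∏ j ∈ Finset.univ.erase i, (if j ∈ S then z j else 1 - z j) := by
    refine Finset.prod_congr rfl fun j hj => ?_
    have hj' : j ≠ i := Finset.ne_of_mem_erase hj
    unfold tog
    by_cases h : i ∈ S <;> simp [h, hj']
  rw [hw, hw, hp]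
  generalize (∏ j ∈ Finset.univ.erase i, (if j ∈ S then z j else 1 - z j)) = p
  unfold Dl tog
  by_cases h : i ∈ S
  · simp [h]; ring
  · simp [h]; ring

lemma Mx_deriv (n : ℕ) (f : Finset (Fin n) → ℝ) (a b : Fin n → ℝ) (t : ℝ) :
    HasDerivAt (fun t => Mx n f (fun j => a j + t * b j))
      (∑ i, b i * Mx n (Dl n i f) (fun j => a j + t * b j)) t := by
  have h1 : ∀ S : Finset (Fin n), HasDerivAt (fun t => Mw n S (fun j => a j + t * b j) * f S)
      ((∑ i, (∏ j ∈ Finset.univ.erase i, (if j ∈ S then a j + t * b j else 1 - (a j + t * b j))) •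
        (if i ∈ S then b i else - b i)) * f S) t := by
    intro S
    refine HasDerivAt.mul_const ?_ _
    unfold Mw
    refine HasDerivAt.fun_finsetProd
      (f := fun j t => if j ∈ S then a j + t * b j else 1 - (a j + t * b j)) ?_
    intro j _
    have h0 : HasDerivAt (fun t => a j + t * b j) (b j) t := by
      simpa using ((hasDerivAt_id t).mul_const (b j)).const_add (a j)
    by_cases h : j ∈ S
    · simpa [h] using h0
    · simpa [h] using h0.const_sub 1
  have h2 := HasDerivAt.fun_sum (u := Finset.univ) (fun S _ => h1 S)
  unfold Mx at *
  refine h2.congr_deriv ?_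
  simp_rw [Finset.sum_mul]
  rw [Finset.sum_comm]
  refine Finset.sum_congr rfl fun i _ => ?_
  have := toggle n i f (fun j => a j + t * b j)
  unfold Mx at this
  rw [← this, Finset.mul_sum]
  refine Finset.sum_congr rfl fun S _ => ?_
  by_cases h : i ∈ S <;> simp [h] <;> ring

lemma Mx_lip (n : ℕ) (f : Finset (Fin n) → ℝ) (x y : Fin n → ℝ) (b : ℝ)
    (hx : ∀ i, 0 ≤ x i ∧ x i ≤ 1) (hy : ∀ i, 0 ≤ y i ∧ y i ≤ 1)
    (hf : ∀ S, 0 ≤ f S ∧ f S ≤ b) : |Mx n f x - Mx n f y| ≤ b * ∑ j, |x j - y j| := by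
  have := norm_image_sub_le_of_norm_deriv_le_segment_01'
    (f := fun t => Mx n f (fun j => y j + t * (x j - y j)))
    (f' := fun t => ∑ i, (x i - y i) * Mx n (Dl n i f) (fun j => y j + t * (x j - y j)))
    (C := b * ∑ j, |x j - y j|)
    (fun t _ => (Mx_deriv n f y (fun j => x j - y j) t).hasDerivWithinAt) ?_
  · simpa using this
  intro t ht
  rw [Real.norm_eq_abs, Finset.mul_sum]
  refine (Finset.abs_sum_le_sum_abs _ _).trans (Finset.sum_le_sum fun i _ => ?_)
  rw [abs_mul, mul_comm]
  refine mul_le_mul_of_nonneg_right ?_ (abs_nonneg _)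
  apply Mx_abs
  · intro j
    have := hx j
    have := hy j
    have h1 := ht.1
    have h2 := ht.2
    constructor <;> nlinarith
  · intro S
    unfold Dl
    rw [abs_le]
    have := hf (insert i S)
    have := hf (S.erase i)
    constructor <;> linarith

lemma pot_eq (n m : ℕ) (c : Fin m → ℕ → ℝ) (x : Fin n → Fin m → ℝ) :
    multilinearPotential n m c x = ∑ e : Fin m,
      Mx n (fun S => ∑ l ∈ Finset.range (S.card + 1), c e l) (fun j => x j e) := by
  unfold multilinearPotential Mx
  simp_rw [Mw_eq]

lemma pot_fderiv (n m : ℕ) (c : Fin m → ℕ → ℝ) (x : Fin n → Fin m → ℝ) (i : Fin n) (e : Fin m) :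
    fderiv ℝ (multilinearPotential n m c) x (Pi.single i (Pi.single e 1))
      = Mx n (Dl n i (fun S => ∑ l ∈ Finset.range (S.card + 1), c e l)) (fun j => x j e) := by
  have hd : Differentiable ℝ (multilinearPotential n m c) := by
    unfold multilinearPotential
    fun_prop
  have h1 := ((hd x).hasFDerivAt.hasLineDerivAt (Pi.single i (Pi.single e 1)))
  unfold HasLineDerivAt at h1
  have h2 := HasDerivAt.fun_sum (u := Finset.univ) (fun (e' : Fin m) _ =>
    Mx_deriv n (fun S => ∑ l ∈ Finset.range (S.card + 1), c e' l) (fun j => x j e')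
      (fun j => (Pi.single i (Pi.single e 1) : Fin n → Fin m → ℝ) j e') 0)
  have h3 : (fun t : ℝ => multilinearPotential n m c
      (x + t • (Pi.single i (Pi.single e 1) : Fin n → Fin m → ℝ))) = _ :=
    funext fun t => pot_eq n m c _
  rw [h3] at h1
  rw [h1.unique h2, Finset.sum_eq_single e, Finset.sum_eq_single i]
  · simp
  · intro j _ hj; simp [hj]
  · simp
  · intro e' _ he
    refine Finset.sum_eq_zero fun j _ => ?_
    by_cases h : j = i
    · subst h; simp [he]
    · simp [h]
  · simp

lemma Dl_bound (n : ℕ) (c : ℕ → ℝ) (cmax : ℝ) (hc : ∀ k, 0 ≤ c k ∧ c k ≤ cmax) (i : Fin n)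
    (S : Finset (Fin n)) :
    0 ≤ Dl n i (fun S => ∑ l ∈ Finset.range (S.card + 1), c l) S ∧
    Dl n i (fun S => ∑ l ∈ Finset.range (S.card + 1), c l) S ≤ cmax := by
  have h : (insert i S).card = (S.erase i).card + 1 := by
    rw [← Finset.card_insert_of_notMem (Finset.notMem_erase i S)]
    congr 1
    ext j
    by_cases hj : j = i <;> simp [hj]
  unfold Dl
  simp only [h]
  rw [Finset.sum_range_succ _ ((S.erase i).card + 1), add_sub_cancel_left]
  exact hc _

theorem multilinear_potential_gradient_lipschitz
    (n m : ℕ) (c : Fin m → ℕ → ℝ) (cmax : ℝ)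
    (hmono : ∀ e, Monotone (c e))
    (hc : ∀ e k, 0 ≤ c e k ∧ c e k ≤ cmax)
    (x y : Fin n → Fin m → ℝ)
    (hx : ∀ i e, 0 ≤ x i e ∧ x i e ≤ 1)
    (hy : ∀ i e, 0 ≤ y i e ∧ y i e ≤ 1) :
    Real.sqrt (∑ i : Fin n, ∑ e : Fin m,
        (fderiv ℝ (multilinearPotential n m c) x (Pi.single i (Pi.single e 1))
          - fderiv ℝ (multilinearPotential n m c) y (Pi.single i (Pi.single e 1))) ^ 2)
      ≤ 2 * (n : ℝ) ^ 2 * Real.sqrt (m : ℝ) * cmax *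
          Real.sqrt (∑ i : Fin n, ∑ e : Fin m, (x i e - y i e) ^ 2) := by
  have hpt : ∀ i e, (fderiv ℝ (multilinearPotential n m c) x (Pi.single i (Pi.single e 1))
          - fderiv ℝ (multilinearPotential n m c) y (Pi.single i (Pi.single e 1))) ^ 2
      ≤ cmax ^ 2 * (n * ∑ j, (x j e - y j e) ^ 2) := by
    intro i e
    rw [pot_fderiv, pot_fderiv]
    have h := Mx_lip n _ (fun j => x j e) (fun j => y j e) cmax (fun j => hx j e)
      (fun j => hy j e) (Dl_bound n (c e) cmax (hc e) i)
    have h2 := pow_le_pow_left₀ (abs_nonneg _) h 2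
    rw [sq_abs, mul_pow] at h2
    refine h2.trans (mul_le_mul_of_nonneg_left ?_ (sq_nonneg _))
    have h3 := sq_sum_le_card_mul_sum_sq (s := (Finset.univ : Finset (Fin n)))
      (f := fun j => |x j e - y j e|)
    simpa using h3
  rcases Nat.eq_zero_or_pos n with hn | hn
  · subst hn; simp
  rcases Nat.eq_zero_or_pos m with hm | hm
  · subst hm; simp
  have hc0 : 0 ≤ cmax := (hc ⟨0, hm⟩ 0).1.trans (hc ⟨0, hm⟩ 0).2
  have hn1 : (1 : ℝ) ≤ n := by exact_mod_cast hn
  have hm1 : 1 ≤ Real.sqrt (m : ℝ) := Real.one_le_sqrt.2 (by exact_mod_cast hm)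
  set Q := ∑ i : Fin n, ∑ e : Fin m, (x i e - y i e) ^ 2 with hQ
  have hQ0 : 0 ≤ Q := Finset.sum_nonneg fun i _ => Finset.sum_nonneg fun e _ => sq_nonneg _
  have hsum : (∑ i : Fin n, ∑ e : Fin m,
        (fderiv ℝ (multilinearPotential n m c) x (Pi.single i (Pi.single e 1))
          - fderiv ℝ (multilinearPotential n m c) y (Pi.single i (Pi.single e 1))) ^ 2)
      ≤ (n * cmax) ^ 2 * Q := by
    refine (Finset.sum_le_sum fun i _ => Finset.sum_le_sum fun e _ => hpt i e).trans ?_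
    rw [hQ, Finset.sum_comm (s := Finset.univ (α := Fin n)) (t := Finset.univ (α := Fin m))
      (f := fun i e => (x i e - y i e) ^ 2)]
    simp only [← Finset.mul_sum, Finset.sum_const, Finset.card_univ, Fintype.card_fin,
      nsmul_eq_mul]
    apply le_of_eq
    ring
  refine (Real.sqrt_le_sqrt hsum).trans ?_
  rw [Real.sqrt_mul (sq_nonneg _), Real.sqrt_sq (by positivity)]
  refine mul_le_mul_of_nonneg_right (mul_le_mul_of_nonneg_right ?_ hc0) (Real.sqrt_nonneg _)
  have h1 : (n : ℝ) ≤ 2 * (n : ℝ) ^ 2 := by nlinarith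
  have h2 : (0 : ℝ) ≤ 2 * (n : ℝ) ^ 2 := by positivity
  nlinarith

end
end

section
/- Prefix decomposition lemma: let s ∈ ℕ, let p : {1,…,s} → {1,…,s} ∪ {⊥}, and let r : {1,…,s} ∪ {⊥} → ℝ^s satisfy r(⊥) = 0 and, for every h ∈ {1,…,s}, r(h) − r(p(h)) = e_h, where e_h is the h-th standard basis vector of ℝ^s. Then for every set S ⊆ {1,…,s} on which p is injective (p(h) = p(k) with h, k ∈ S implies h = k), there exist coefficients α_1,…,α_s with each α_h ∈ {−1, 0, 1} such that Σ_{h∈S} e_h = Σ_{h=1}^{s} α_h · r(h). -/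
/-!
STATEMENT 12 (Prefix decomposition lemma): let `s ∈ ℕ`, `p : {1,…,s} → {1,…,s} ∪ {⊥}`,
and `r : {1,…,s} ∪ {⊥} → ℝ^s` with `r(⊥) = 0` and `r(h) − r(p(h)) = e_h` for every
`h`, where `e_h` is the `h`-th standard basis vector. Then for every `S ⊆ {1,…,s}`
on which `p` is injective, there exist coefficients `α_h ∈ {−1,0,1}` such that
`Σ_{h∈S} e_h = Σ_{h=1}^{s} α_h · r(h)`.
-/

open Finset

theorem prefix_decomposition
    (s : ℕ) (p : Fin s → Option (Fin s))
    (r : Option (Fin s) → (Fin s → ℝ))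
    (hr0 : r none = 0)
    (hrstep : ∀ h : Fin s, r (some h) - r (p h) = Pi.single h 1)
    (S : Finset (Fin s))
    (hinj : ∀ h ∈ S, ∀ k ∈ S, p h = p k → h = k) :
    ∃ α : Fin s → ℝ,
      (∀ h, α h = -1 ∨ α h = 0 ∨ α h = 1) ∧
      (∑ h ∈ S, Pi.single h (1 : ℝ)) = ∑ h : Fin s, α h • r (some h) := by
  classical
  refine ⟨fun h => (if h ∈ S then 1 else 0) - (if some h ∈ S.image p then 1 else 0), ?_, ?_⟩
  · intro h
    dsimp only
    split_ifs <;> norm_num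
  · have h1 : ∑ h ∈ S, r (p h) = ∑ o ∈ S.image p, r o :=
      (Finset.sum_image (fun h hh k hk e => hinj h hh k hk e)).symm
    have h2 : ∑ o ∈ S.image p, r o
        = ∑ h : Fin s, (if some h ∈ S.image p then (1 : ℝ) else 0) • r (some h) := by
      have h3 : ∑ o ∈ S.image p, r o
          = ∑ o : Option (Fin s), if o ∈ S.image p then r o else 0 := by
        rw [Finset.sum_ite_mem, Finset.univ_inter]
      rw [h3, Fintype.sum_option, hr0, ite_self, zero_add]
      refine Finset.sum_congr rfl fun h _ => ?_
      rw [ite_smul, one_smul, zero_smul]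
    have h4 : ∑ h ∈ S, r (some h)
        = ∑ h : Fin s, (if h ∈ S then (1 : ℝ) else 0) • r (some h) := by
      simp only [ite_smul, one_smul, zero_smul]
      rw [Finset.sum_ite_mem, Finset.univ_inter]
    simp only [sub_smul]
    rw [Finset.sum_sub_distrib, ← h4, ← h2, ← h1, ← Finset.sum_sub_distrib]
    exact Finset.sum_congr rfl fun h _ => (hrstep h).symm
end

section
/- Abstract 1-spanner theorem: let R : ℝ^m → ℝ^s and F : ℝ^s → ℝ^m be linear maps, let b_1,…,b_s ∈ ℝ^m satisfy F(R(b_h)) = b_h for every h, let p : {1,…,s} → {1,…,s} ∪ {⊥}, and define r : {1,…,s} ∪ {⊥} → ℝ^s by r(⊥) = 0 and r(h) = R(b_h); assume r(h) − r(p(h)) = e_h for every h, where e_h is the h-th standard basis vector of ℝ^s. Let x ∈ ℝ^m satisfy F(R(x)) = x and R(x) = Σ_{h∈S} e_h for some set S ⊆ {1,…,s} on which p is injective. Then there exist α_1,…,α_s ∈ ℝ with α_h² ≤ 1 for every h and x = Σ_{h=1}^{s} α_h b_h. -/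
/-!
STATEMENT 13 (Abstract 1-spanner theorem): let `R : ℝ^m → ℝ^s` and `F : ℝ^s → ℝ^m`
be linear maps, `b_1,…,b_s ∈ ℝ^m` with `F(R(b_h)) = b_h`, `p : {1,…,s} → {1,…,s} ∪ {⊥}`,
and `r : {1,…,s} ∪ {⊥} → ℝ^s` with `r(⊥) = 0` and `r(h) = R(b_h)`; assume
`r(h) − r(p(h)) = e_h` for every `h`. Let `x ∈ ℝ^m` satisfy `F(R(x)) = x` and
`R(x) = Σ_{h∈S} e_h` for some `S` on which `p` is injective. Then there exist
`α_1,…,α_s ∈ ℝ` with `α_h² ≤ 1` and `x = Σ_{h=1}^{s} α_h b_h`.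
-/

open Finset

theorem abstract_one_spanner
    (m s : ℕ)
    (R : (Fin m → ℝ) →ₗ[ℝ] (Fin s → ℝ))
    (F : (Fin s → ℝ) →ₗ[ℝ] (Fin m → ℝ))
    (b : Fin s → (Fin m → ℝ))
    (hb : ∀ h, F (R (b h)) = b h)
    (p : Fin s → Option (Fin s))
    (r : Option (Fin s) → (Fin s → ℝ))
    (hrnone : r none = 0)
    (hrsome : ∀ h : Fin s, r (some h) = R (b h))
    (hrstep : ∀ h : Fin s, r (some h) - r (p h) = Pi.single h 1)
    (x : Fin m → ℝ) (hx : F (R x) = x)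
    (S : Finset (Fin s))
    (hxS : R x = ∑ h ∈ S, Pi.single h (1 : ℝ))
    (hinj : ∀ h ∈ S, ∀ k ∈ S, p h = p k → h = k) :
    ∃ α : Fin s → ℝ,
      (∀ h, (α h) ^ 2 ≤ 1) ∧ x = ∑ h : Fin s, α h • b h := by
  classical
  have hFp : ∀ o : Option (Fin s),
      F (r o) = ∑ k : Fin s, (if o = some k then (1 : ℝ) else 0) • b k := by
    intro o
    cases o with
    | none => simp [hrnone]
    | some j => simp [hrsome, hb]
  refine ⟨fun k => (if k ∈ S then (1 : ℝ) else 0)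
    - ∑ h ∈ S, (if p h = some k then (1 : ℝ) else 0), ?_, ?_⟩
  · intro k
    have hc : (S.filter (fun h => p h = some k)).card ≤ 1 := by
      rw [Finset.card_le_one]
      intro a ha c hc
      rw [Finset.mem_filter] at ha hc
      exact hinj a ha.1 c hc.1 (ha.2.trans hc.2.symm)
    have h1 : ∑ h ∈ S, (if p h = some k then (1 : ℝ) else 0)
        = ((S.filter (fun h => p h = some k)).card : ℝ) := by
      simp
    have h2 : ((S.filter (fun h => p h = some k)).card : ℝ) ≤ 1 := by exact_mod_cast hc
    have h3 : (0 : ℝ) ≤ ((S.filter (fun h => p h = some k)).card : ℝ) := by positivity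
    simp only [h1]
    split_ifs <;> nlinarith
  · calc x = F (R x) := hx.symm
      _ = ∑ h ∈ S, (F (r (some h)) - F (r (p h))) := by
          rw [hxS, map_sum]
          refine Finset.sum_congr rfl fun h _ => ?_
          rw [← hrstep h, map_sub]
      _ = ∑ h ∈ S, b h
          - ∑ h ∈ S, ∑ k : Fin s, (if p h = some k then (1 : ℝ) else 0) • b k := by
          rw [Finset.sum_sub_distrib]
          congr 1
          · exact Finset.sum_congr rfl fun h _ => by rw [hrsome, hb]
          · exact Finset.sum_congr rfl fun h _ => hFp _
      _ = _ := by
          rw [Finset.sum_comm]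
          simp only [sub_smul, Finset.sum_sub_distrib, Finset.sum_smul]
          congr 1
          simp [ite_smul]
end

section
/- Proximal point inequality: let λ > 0, let D ⊆ ℝ^d be nonempty, closed and convex, and let f : ℝ^d → ℝ be differentiable with (1/λ)-Lipschitz gradient. Let α ∈ D and let y ∈ D be a minimizer over D of the function y ↦ f(y) + (1/λ)‖α − y‖₂². Then ⟨∇f(α), α − y⟩ ≥ (1/(2λ))·‖y − α‖₂². -/
/-!
STATEMENT 14 (Proximal point inequality): let `λ > 0`, `D ⊆ ℝ^d` nonempty, closed
and convex, and `f : ℝ^d → ℝ` differentiable with `(1/λ)`-Lipschitz gradient. Let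
`α ∈ D` and `y ∈ D` be a minimizer over `D` of `y ↦ f(y) + (1/λ)‖α − y‖₂²`. Then
`⟨∇f(α), α − y⟩ ≥ (1/(2λ))·‖y − α‖₂²`.
-/

open RealInnerProductSpace

theorem proximal_point_inequality
    (d : ℕ) (lam : ℝ) (hlam : 0 < lam)
    (D : Set (EuclideanSpace ℝ (Fin d)))
    (hne : D.Nonempty) (hclosed : IsClosed D) (hconv : Convex ℝ D)
    (f : EuclideanSpace ℝ (Fin d) → ℝ)
    (hdiff : Differentiable ℝ f)
    (hlip : ∀ x y, ‖gradient f x - gradient f y‖ ≤ (1 / lam) * ‖x - y‖)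
    (α : EuclideanSpace ℝ (Fin d)) (hα : α ∈ D)
    (y : EuclideanSpace ℝ (Fin d)) (hy : y ∈ D)
    (hymin : ∀ w ∈ D, f y + (1 / lam) * ‖α - y‖ ^ 2 ≤ f w + (1 / lam) * ‖α - w‖ ^ 2) :
    ⟪gradient f α, α - y⟫ ≥ (1 / (2 * lam)) * ‖y - α‖ ^ 2 := by
  set v := y - α with hv
  have hg : ∀ t : ℝ, HasDerivAt (fun t : ℝ => f (α + t • v) - t * ⟪gradient f α, v⟫
      + t ^ 2 * (1 / (2 * lam) * ‖v‖ ^ 2))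
      (⟪gradient f (α + t • v), v⟫ - 1 * ⟪gradient f α, v⟫
        + (2 * t) * (1 / (2 * lam) * ‖v‖ ^ 2)) t := by
    intro t
    have h1 : HasDerivAt (fun t : ℝ => α + t • v) v t := by
      simpa using ((hasDerivAt_id t).smul_const v).const_add α
    have h2 := (hdiff (α + t • v)).hasGradientAt.hasFDerivAt.comp_hasDerivAt t h1
    have h2' : HasDerivAt (fun t : ℝ => f (α + t • v)) ⟪gradient f (α + t • v), v⟫ t := by
      simpa [Function.comp_def] using h2
    have h3 : HasDerivAt (fun t : ℝ => t ^ 2) (2 * t) t := by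
      simpa using hasDerivAt_pow 2 t
    exact (h2'.sub ((hasDerivAt_id t).mul_const _)).add (h3.mul_const _)
  obtain ⟨c, hc, hceq⟩ := exists_hasDerivAt_eq_slope _ _ (zero_lt_one' ℝ)
    (fun t _ => (hg t).continuousAt.continuousWithinAt) (fun t _ => hg t)
  have hav : α + v = y := by simp [hv]
  simp only [one_smul, zero_smul, add_zero, hav] at hceq
  have h4 : -(‖gradient f (α + c • v) - gradient f α‖ * ‖v‖)
      ≤ ⟪gradient f (α + c • v) - gradient f α, v⟫ :=
    (abs_le.mp (abs_real_inner_le_norm _ _)).1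
  have h5 := mul_le_mul_of_nonneg_right (hlip (α + c • v) α) (norm_nonneg v)
  rw [add_sub_cancel_left, norm_smul, Real.norm_of_nonneg hc.1.le] at h5
  rw [inner_sub_left] at h4
  have h6 := hymin α hα
  have h7 : ‖α - y‖ = ‖v‖ := norm_sub_rev _ _
  have h8 : α - y = -v := by simp [hv]
  rw [h7] at h6
  simp only [sub_self, norm_zero] at h6
  rw [h8, inner_neg_right]
  have h9 : 1 / (2 * lam) = (1 / lam) / 2 := by field_simp
  rw [h9] at hceq ⊢
  ring_nf at hceq h4 h5 h6 ⊢
  linarith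
end

section
/- Gap control: let λ > 0, let D ⊆ ℝ^d be nonempty, closed and convex, and let f : ℝ^d → ℝ be differentiable with (1/λ)-Lipschitz gradient. Let α ∈ D, let y ∈ D be a minimizer over D of y ↦ f(y) + (1/λ)‖α − y‖₂² (the proximal point of α), and let z ∈ D be the nearest point of D to α − (λ/2)∇f(α). Then the projected-gradient stationarity gap satisfies ‖z − α‖₂ ≤ (3/2)·‖y − α‖₂. -/
/-!
STATEMENT 15 (Gap control): let `λ > 0`, `D ⊆ ℝ^d` nonempty, closed and convex, and
`f : ℝ^d → ℝ` differentiable with `(1/λ)`-Lipschitz gradient. Let `α ∈ D`, let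
`y ∈ D` be a minimizer over `D` of `y ↦ f(y) + (1/λ)‖α − y‖₂²` (the proximal point
of `α`), and let `z ∈ D` be the nearest point of `D` to `α − (λ/2)∇f(α)`. Then the
projected-gradient stationarity gap satisfies `‖z − α‖₂ ≤ (3/2)·‖y − α‖₂`.
-/

theorem gc_first_order {E : Type*} [NormedAddCommGroup E] [InnerProductSpace ℝ E]
    {D : Set E} (hconv : Convex ℝ D) (g : E → ℝ) (L : E →L[ℝ] ℝ) (c : ℝ) (p a : E)
    (hg : HasFDerivAt g L a) (ha : a ∈ D)
    (hmin : ∀ w ∈ D, g a + c * ‖p - a‖ ^ 2 ≤ g w + c * ‖p - w‖ ^ 2) (w : E) (hw : w ∈ D) :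
    0 ≤ L (w - a) + c * (2 * inner ℝ (a - p) (w - a)) := by
  have h1 : HasFDerivAt (fun w : E => p - w) (-ContinuousLinearMap.id ℝ E) a :=
    (hasFDerivAt_id a).const_sub p
  have h2 := hg.add (h1.norm_sq.const_mul c)
  have hm : IsLocalMinOn (fun w => g w + c * ‖p - w‖ ^ 2) D a := by
    apply IsMinOn.localize
    intro w hw
    exact hmin w hw
  have h3 := hm.hasFDerivWithinAt_nonneg h2.hasFDerivWithinAt
    (sub_mem_posTangentConeAt_of_segment_subset (hconv.segment_subset ha hw))
  rw [inner_sub_left, map_sub]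
  simpa using h3

theorem gap_control
    (d : ℕ) (lam : ℝ) (hlam : 0 < lam)
    (D : Set (EuclideanSpace ℝ (Fin d)))
    (hne : D.Nonempty) (hclosed : IsClosed D) (hconv : Convex ℝ D)
    (f : EuclideanSpace ℝ (Fin d) → ℝ)
    (hdiff : Differentiable ℝ f)
    (hlip : ∀ x y, ‖gradient f x - gradient f y‖ ≤ (1 / lam) * ‖x - y‖)
    (α : EuclideanSpace ℝ (Fin d)) (hα : α ∈ D)
    (y : EuclideanSpace ℝ (Fin d)) (hy : y ∈ D)
    (hymin : ∀ w ∈ D, f y + (1 / lam) * ‖α - y‖ ^ 2 ≤ f w + (1 / lam) * ‖α - w‖ ^ 2)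
    (z : EuclideanSpace ℝ (Fin d)) (hz : z ∈ D)
    (hzmin : ∀ w ∈ D,
      ‖α - (lam / 2) • gradient f α - z‖ ≤ ‖α - (lam / 2) • gradient f α - w‖) :
    ‖z - α‖ ≤ (3 / 2) * ‖y - α‖ := by
  have A := gc_first_order hconv f _ (1 / lam) α y (hdiff y).hasGradientAt.hasFDerivAt hy hymin z hz
  have B := gc_first_order hconv (fun _ => 0) 0 1 (α - (lam / 2) • gradient f α) z
    (hasFDerivAt_const _ _) hz
    (fun w hw => by
      have := pow_le_pow_left₀ (norm_nonneg _) (hzmin w hw) 2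
      simpa using this) y hy
  rw [InnerProductSpace.toDual_apply_apply] at A
  have A' : 0 ≤ lam / 2 * inner ℝ (gradient f y) (z - y) + inner ℝ (y - α) (z - y) := by
    have := mul_nonneg (by positivity : 0 ≤ lam / 2) A
    field_simp at this ⊢
    linarith
  have B' : 0 ≤ - inner ℝ (z - α) (z - y) - lam / 2 * inner ℝ (gradient f α) (z - y) := by
    have e1 : z - (α - (lam / 2) • gradient f α) = (z - α) + (lam / 2) • gradient f α := by abel
    have e2 : y - z = -(z - y) := by abel
    rw [e1, e2, inner_neg_right, inner_add_left, inner_smul_left] at B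
    simp only [ContinuousLinearMap.zero_apply, conj_trivial] at B
    linarith
  have C : ‖z - y‖ ^ 2 = inner ℝ (z - α) (z - y) - inner ℝ (y - α) (z - y) := by
    rw [← inner_sub_left, sub_sub_sub_cancel_right, real_inner_self_eq_norm_sq]
  have E : inner ℝ (gradient f y) (z - y) - inner ℝ (gradient f α) (z - y)
      ≤ (1 / lam) * ‖y - α‖ * ‖z - y‖ := by
    rw [← inner_sub_left]
    exact (real_inner_le_norm _ _).trans
      (mul_le_mul_of_nonneg_right (hlip y α) (norm_nonneg _))
  have F : ‖z - y‖ ^ 2 ≤ 1 / 2 * ‖y - α‖ * ‖z - y‖ := by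
    have := mul_le_mul_of_nonneg_left E (by positivity : 0 ≤ lam / 2)
    have e : lam / 2 * (1 / lam * ‖y - α‖ * ‖z - y‖) = 1 / 2 * ‖y - α‖ * ‖z - y‖ := by
      field_simp
    linarith
  have G : ‖z - y‖ ≤ 1 / 2 * ‖y - α‖ := by
    rcases (norm_nonneg (z - y)).eq_or_lt with h | h
    · rw [← h]; positivity
    · exact le_of_mul_le_mul_right (by linarith [sq (‖z - y‖)]) h
  have T : ‖z - α‖ ≤ ‖z - y‖ + ‖y - α‖ := norm_sub_le_norm_sub_add_norm_sub z y α
  linarith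
end

section
/- Stationarity controls unilateral improvement: let λ > 0, let D ⊆ ℝ^d be nonempty, closed and convex, let f : ℝ^d → ℝ be differentiable, let α ∈ D, and let α⁺ be the nearest point of D to α − (λ/2)∇f(α). Then for every u ∈ D, ⟨∇f(α), α − u⟩ ≤ ((2/λ)·‖α⁺ − u‖₂ + ‖∇f(α)‖₂) · ‖α − α⁺‖₂. -/
/-!
STATEMENT 16 (Stationarity controls unilateral improvement): let `λ > 0`, `D ⊆ ℝ^d`
nonempty, closed and convex, `f : ℝ^d → ℝ` differentiable, `α ∈ D`, and `α⁺` the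
nearest point of `D` to `α − (λ/2)∇f(α)`. Then for every `u ∈ D`,
`⟨∇f(α), α − u⟩ ≤ ((2/λ)·‖α⁺ − u‖₂ + ‖∇f(α)‖₂) · ‖α − α⁺‖₂`.
-/

open RealInnerProductSpace

theorem stationarity_controls_improvement
    (d : ℕ) (lam : ℝ) (hlam : 0 < lam)
    (D : Set (EuclideanSpace ℝ (Fin d)))
    (hne : D.Nonempty) (hclosed : IsClosed D) (hconv : Convex ℝ D)
    (f : EuclideanSpace ℝ (Fin d) → ℝ)
    (hdiff : Differentiable ℝ f)
    (α : EuclideanSpace ℝ (Fin d)) (hα : α ∈ D)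
    (αplus : EuclideanSpace ℝ (Fin d)) (hαplus : αplus ∈ D)
    (hproj : ∀ w ∈ D,
      ‖α - (lam / 2) • gradient f α - αplus‖ ≤ ‖α - (lam / 2) • gradient f α - w‖) :
    ∀ u ∈ D,
      ⟪gradient f α, α - u⟫
        ≤ ((2 / lam) * ‖αplus - u‖ + ‖gradient f α‖) * ‖α - αplus‖ := by
  intro u hu
  have hmin : ‖α - (lam / 2) • gradient f α - αplus‖
      = ⨅ w : D, ‖α - (lam / 2) • gradient f α - w‖ := by
    haveI : Nonempty D := ⟨⟨αplus, hαplus⟩⟩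
    apply le_antisymm
    · exact le_ciInf fun w => hproj w w.2
    · exact ciInf_le (f := fun w : D => ‖α - (lam / 2) • gradient f α - w‖)
        ⟨0, by rintro _ ⟨w, rfl⟩; exact norm_nonneg _⟩ ⟨αplus, hαplus⟩
  have hvi := (norm_eq_iInf_iff_real_inner_le_zero hconv hαplus).1 hmin u hu
  generalize gradient f α = g at *
  have e1 : α - (lam / 2) • g - αplus = (α - αplus) - (lam / 2) • g := by abel
  have e2 : u - αplus = -(αplus - u) := by abel
  have e3 : α - u = (α - αplus) + (αplus - u) := by abel
  rw [e1, e2, inner_neg_right, inner_sub_left, real_inner_smul_left] at hvi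
  rw [e3, inner_add_right]
  have h1 := real_inner_le_norm g (α - αplus)
  have h2 := real_inner_le_norm (α - αplus) (αplus - u)
  have h3 : inner ℝ g (αplus - u) ≤ (2 / lam) * (‖α - αplus‖ * ‖αplus - u‖) := by
    rw [div_mul_eq_mul_div, le_div_iff₀ hlam]
    linarith
  linarith
end
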